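/- Let ℓ : (0,∞) → (0,∞) be slowly varying at ∞ (i.e., for every c > 0, ℓ(ct)/ℓ(t) → 1 as t → ∞) and let L > 0. Let γ be a Borel measure on (0,1] with ∫₀¹ x γ(dx) < ∞ and tail γ̄(x) = γ([x,1]) satisfying γ̄(x) x / ℓ(1/x) → L as x ↓ 0. Then for every integer r ≥ 2, as n → ∞, binom(n,r) ∫₀¹ x^r (1−x)^{n−r} γ(dx) / (n ℓ(n)) → L / (r(r−1)). -/

import Mathlib

/-!
Put `G x = γ([x, 1])`. The hypotheses say that `G` is regularly varying at `0` with index `-α`,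
where `α = 1`. Writing `u ^ r * (1 - u / n) ^ (n - r)` as the integral of its derivative `h n`, the
layer cake formula gives
`n ^ r * ∫ x ^ r * (1 - x) ^ (n - r) ∂γ = ∫ u in (0, ∞), h n u * G (u / n)`.
After division by `G (1 / n)` the integrand tends to
`(r * u ^ (r - 1) - u ^ r) * exp (-u) * u ^ (-α)`, whose integral is `α * Γ(r - α)`. A Potter
bound `G (u * y) / G y ≤ 1 + C * u ^ (-β)` with `α < β < r` provides the domination and the
integrability.
-/

open Filter MeasureTheory Real

section RegularVariation

open Set Topology

theorem le_pow_mul_of_forall_mul_le {G : ℝ → ℝ} {a K δ y : ℝ} (ha0 : 0 < a) (ha1 : a ≤ 1)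
    (hK : 0 ≤ K) (hG : ∀ x ∈ Ioo 0 δ, G (a * x) ≤ K * G x) (hy : y ∈ Ioo 0 δ) (k : ℕ) :
    G (a ^ k * y) ≤ K ^ k * G y := by
  induction k with
  | zero => simp
  | succ k ih =>
    have hmem : a ^ k * y ∈ Ioo 0 δ :=
      ⟨mul_pos (pow_pos ha0 k) hy.1,
        (mul_le_of_le_one_left hy.1.le (pow_le_one₀ ha0.le ha1)).trans_lt hy.2⟩
    calc G (a ^ (k + 1) * y) = G (a * (a ^ k * y)) := by rw [pow_succ', mul_assoc]
      _ ≤ K * G (a ^ k * y) := hG _ hmem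
      _ ≤ K * (K ^ k * G y) := mul_le_mul_of_nonneg_left ih hK
      _ = K ^ (k + 1) * G y := by rw [pow_succ', mul_assoc]

theorem two_rpow_pow_le_rpow_neg {u β : ℝ} (hu : 0 < u) (hβ : 0 ≤ β) {k : ℕ}
    (huk : u ≤ 2⁻¹ ^ k) : ((2 : ℝ) ^ β) ^ k ≤ u ^ (-β) := by
  calc ((2 : ℝ) ^ β) ^ k = (2⁻¹ ^ k) ^ (-β) := by
        rw [inv_pow, inv_rpow (by positivity), rpow_neg (by positivity), inv_inv,
          ← rpow_natCast, ← rpow_natCast, ← rpow_mul zero_le_two, ← rpow_mul zero_le_two, mul_comm]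
    _ ≤ u ^ (-β) := rpow_le_rpow_of_nonpos hu huk (by linarith)

theorem le_one_add_rpow_mul_of_antitoneOn {G : ℝ → ℝ} (hanti : AntitoneOn G (Ioi 0))
    (hG0 : ∀ x, 0 ≤ G x) {β δ y u : ℝ} (hβ : 0 ≤ β)
    (hG : ∀ x ∈ Ioo 0 δ, G (2⁻¹ * x) ≤ 2 ^ β * G x) (hy : y ∈ Ioo 0 δ) (hu : 0 < u) :
    G (u * y) ≤ (1 + 2 ^ β * u ^ (-β)) * G y := by
  have hC : 0 ≤ (2 : ℝ) ^ β * u ^ (-β) := by positivity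
  rcases le_total 1 u with h1u | hu1
  · calc G (u * y) ≤ G y := hanti hy.1 (mul_pos hu hy.1) (le_mul_of_one_le_left hy.1.le h1u)
      _ ≤ (1 + 2 ^ β * u ^ (-β)) * G y := le_mul_of_one_le_left (hG0 y) (by linarith)
  obtain ⟨k, hku, huk⟩ := exists_nat_pow_near_of_lt_one hu hu1 (y := 2⁻¹) (by norm_num)
    (by norm_num)
  calc G (u * y) ≤ G (2⁻¹ ^ (k + 1) * y) :=
        hanti (mul_pos (by positivity) hy.1) (mul_pos hu hy.1)
          (mul_le_mul_of_nonneg_right hku.le hy.1.le)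
    _ ≤ (2 ^ β) ^ (k + 1) * G y :=
        le_pow_mul_of_forall_mul_le (by norm_num) (by norm_num) (by positivity) hG hy _
    _ = 2 ^ β * (2 ^ β) ^ k * G y := by rw [pow_succ']
    _ ≤ (1 + 2 ^ β * u ^ (-β)) * G y := by
        refine mul_le_mul_of_nonneg_right ?_ (hG0 y)
        have := mul_le_mul_of_nonneg_left (two_rpow_pow_le_rpow_neg hu hβ huk)
          (by positivity : (0 : ℝ) ≤ 2 ^ β)
        linarith

/-- `G` is regularly varying at `0` from the right, with index `ρ`. Because `x / 0 = 0`, the limit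
at `c = 1` already forces `G` to be nonzero near `0`. -/
def RegularlyVaryingAtZero (G : ℝ → ℝ) (ρ : ℝ) : Prop :=
  ∀ c : ℝ, 0 < c → Tendsto (fun x => G (c * x) / G x) (𝓝[>] 0) (𝓝 (c ^ ρ))

namespace RegularlyVaryingAtZero

theorem of_tendsto_mul_rpow_div {ℓ G : ℝ → ℝ} {α L : ℝ}
    (hℓ : ∀ c : ℝ, 0 < c → Tendsto (fun t => ℓ (c * t) / ℓ t) atTop (𝓝 1)) (hL : L ≠ 0)
    (hG : Tendsto (fun x => G x * x ^ α / ℓ (1 / x)) (𝓝[>] 0) (𝓝 L)) :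
    RegularlyVaryingAtZero G (-α) := by
  intro c hc
  have hscale : Tendsto (fun x : ℝ => c * x) (𝓝[>] 0) (𝓝[>] 0) := by
    refine tendsto_nhdsWithin_iff.2 ⟨?_, ?_⟩
    · simpa using ((continuous_const_mul c).tendsto 0).mono_left nhdsWithin_le_nhds
    · filter_upwards [self_mem_nhdsWithin] with x hx using mul_pos hc hx
  have hGc := hG.comp hscale
  have hℓc := (hℓ c⁻¹ (inv_pos.2 hc)).comp (tendsto_inv_nhdsGT_zero (𝕜 := ℝ))
  have hprod := (((hGc.div hG hL).mul hℓc).mul_const (c ^ (-α)))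
  rw [div_self hL, one_mul, one_mul] at hprod
  refine hprod.congr' ?_
  filter_upwards [self_mem_nhdsWithin, hG.eventually_ne hL, hGc.eventually_ne hL]
    with x (hx : 0 < x) hGx hGcx
  simp only [Function.comp_apply, ne_eq, div_eq_zero_iff, mul_eq_zero, not_or] at hGx hGcx
  obtain ⟨⟨hGx, hxα⟩, hℓx⟩ := hGx
  obtain ⟨-, hℓcx⟩ := hGcx
  have hcα : c ^ α ≠ 0 := (rpow_pos_of_pos hc α).ne'
  simp only [Function.comp_apply, Pi.div_apply]
  rw [← mul_inv, inv_eq_one_div (c * x), inv_eq_one_div x, mul_rpow hc.le hx.le, rpow_neg hc.le]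
  field_simp

variable {G : ℝ → ℝ} {ρ β : ℝ}

theorem eventually_ne_zero (hG : RegularlyVaryingAtZero G ρ) : ∀ᶠ x in 𝓝[>] 0, G x ≠ 0 := by
  filter_upwards [(hG 1 one_pos).eventually_ne (one_rpow ρ ▸ one_ne_zero)] with x hx hGx
  simp [hGx] at hx

theorem eventually_le_two_rpow_mul (hG : RegularlyVaryingAtZero G ρ) (hG0 : ∀ x, 0 ≤ G x)
    (hβρ : -β < ρ) : ∀ᶠ x in 𝓝[>] 0, G (2⁻¹ * x) ≤ 2 ^ β * G x := by
  have hlt : (2⁻¹ : ℝ) ^ ρ < 2 ^ β := by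
    rw [inv_rpow zero_le_two, ← rpow_neg zero_le_two]
    exact rpow_lt_rpow_of_exponent_lt one_lt_two (by linarith)
  filter_upwards [(hG 2⁻¹ (by norm_num)).eventually_lt_const hlt, hG.eventually_ne_zero]
    with x hx hx0
  exact ((div_lt_iff₀ ((hG0 x).lt_of_ne' hx0)).1 hx).le

/-- A Potter bound in which monotonicity of `G` takes the place of the uniform convergence theorem
for regularly varying functions. -/
theorem eventually_forall_div_le (hG : RegularlyVaryingAtZero G ρ)
    (hanti : AntitoneOn G (Ioi 0)) (hG0 : ∀ x, 0 ≤ G x) (hβ : 0 ≤ β) (hβρ : -β < ρ) :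
    ∀ᶠ y in 𝓝[>] 0, ∀ u, 0 < u → G (u * y) / G y ≤ 1 + 2 ^ β * u ^ (-β) := by
  obtain ⟨δ, hδ, hsub⟩ :=
    mem_nhdsGT_iff_exists_Ioo_subset.1 (hG.eventually_le_two_rpow_mul hG0 hβρ)
  filter_upwards [Ioo_mem_nhdsGT hδ] with y hy u hu
  exact div_le_of_le_mul₀ (hG0 y) (by positivity)
    (le_one_add_rpow_mul_of_antitoneOn hanti hG0 hβ (fun x hx => hsub hx) hy hu)

variable {ι : Type*} {l : Filter ι} {y : ι → ℝ} {h : ι → ℝ → ℝ} {k H : ℝ → ℝ}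

theorem eventually_forall_norm_mul_div_le (hG : RegularlyVaryingAtZero G ρ)
    (hanti : AntitoneOn G (Ioi 0)) (hG0 : ∀ x, 0 ≤ G x) (hβ : 0 ≤ β) (hβρ : -β < ρ)
    (hy : Tendsto y l (𝓝[>] 0))
    (hH0 : ∀ u, 0 < u → 0 ≤ H u)
    (hbound : ∀ᶠ i in l, ∀ u, 0 < u → G (u * y i) ≠ 0 → ‖h i u‖ ≤ H u) :
    ∀ᶠ i in l, ∀ u, 0 < u →
      ‖h i u * (G (u * y i) / G (y i))‖ ≤ H u * (1 + 2 ^ β * u ^ (-β)) := by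
  filter_upwards [hbound, hy.eventually (hG.eventually_forall_div_le hanti hG0 hβ hβρ)]
    with i hi hpotter u hu
  have hratio : 0 ≤ G (u * y i) / G (y i) := div_nonneg (hG0 _) (hG0 _)
  rw [norm_mul, norm_of_nonneg hratio]
  by_cases hGu : G (u * y i) = 0
  · rw [hGu, zero_div, mul_zero]
    exact mul_nonneg (hH0 u hu) (by positivity)
  · exact mul_le_mul (hi u hu hGu) (hpotter u hu) hratio (hH0 u hu)

theorem aestronglyMeasurable_mul_div (hanti : AntitoneOn G (Ioi 0)) {g : ℝ → ℝ}
    (hg : Measurable g) {s : ℝ} (hs : 0 < s) :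
    AEStronglyMeasurable (fun u => g u * (G (u * s) / G s)) (volume.restrict (Ioi 0)) := by
  have hGs : AntitoneOn (fun u => G (u * s)) (Ioi 0) := fun a ha b hb hab =>
    hanti (mul_pos ha hs) (mul_pos hb hs) (mul_le_mul_of_nonneg_right hab hs.le)
  exact (hg.aemeasurable.mul
    ((aemeasurable_restrict_of_antitoneOn measurableSet_Ioi hGs).div_const _)).aestronglyMeasurable

theorem integrableOn_mul_one_add_rpow (hH : IntegrableOn H (Ioi 0))
    (hHβ : IntegrableOn (fun u => H u * u ^ (-β)) (Ioi 0)) :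
    IntegrableOn (fun u => H u * (1 + 2 ^ β * u ^ (-β))) (Ioi 0) :=
  (hH.add (hHβ.const_mul (2 ^ β))).congr (ae_of_all _ fun u => by simp only [Pi.add_apply]; ring)

theorem eventually_integrableOn_mul_comp_mul (hG : RegularlyVaryingAtZero G ρ)
    (hanti : AntitoneOn G (Ioi 0)) (hG0 : ∀ x, 0 ≤ G x) (hβ : 0 ≤ β) (hβρ : -β < ρ)
    (hy : Tendsto y l (𝓝[>] 0)) (hh : ∀ i, Measurable (h i)) (hH0 : ∀ u, 0 < u → 0 ≤ H u)
    (hbound : ∀ᶠ i in l, ∀ u, 0 < u → G (u * y i) ≠ 0 → ‖h i u‖ ≤ H u)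
    (hH : IntegrableOn H (Ioi 0)) (hHβ : IntegrableOn (fun u => H u * u ^ (-β)) (Ioi 0)) :
    ∀ᶠ i in l, IntegrableOn (fun u => h i u * G (u * y i)) (Ioi 0) := by
  filter_upwards [hG.eventually_forall_norm_mul_div_le hanti hG0 hβ hβρ hy hH0 hbound,
    hy.eventually self_mem_nhdsWithin, hy.eventually hG.eventually_ne_zero] with i hi hyi hGyi
  have hratio : IntegrableOn (fun u => h i u * (G (u * y i) / G (y i))) (Ioi 0) :=
    (integrableOn_mul_one_add_rpow hH hHβ).mono' (aestronglyMeasurable_mul_div hanti (hh i) hyi)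
      ((ae_restrict_mem measurableSet_Ioi).mono hi)
  exact (hratio.mul_const (G (y i))).congr (ae_of_all _ fun u => by field_simp)

theorem tendsto_integral_mul_comp_mul_div [l.IsCountablyGenerated]
    (hG : RegularlyVaryingAtZero G ρ)
    (hanti : AntitoneOn G (Ioi 0)) (hG0 : ∀ x, 0 ≤ G x) (hβ : 0 ≤ β) (hβρ : -β < ρ)
    (hy : Tendsto y l (𝓝[>] 0)) (hh : ∀ i, Measurable (h i)) (hH0 : ∀ u, 0 < u → 0 ≤ H u)
    (hbound : ∀ᶠ i in l, ∀ u, 0 < u → G (u * y i) ≠ 0 → ‖h i u‖ ≤ H u)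
    (hH : IntegrableOn H (Ioi 0)) (hHβ : IntegrableOn (fun u => H u * u ^ (-β)) (Ioi 0))
    (hlim : ∀ u, 0 < u → Tendsto (fun i => h i u) l (𝓝 (k u))) :
    Tendsto (fun i => (∫ u in Ioi 0, h i u * G (u * y i)) / G (y i)) l
      (𝓝 (∫ u in Ioi 0, k u * u ^ ρ)) := by
  simp only [← integral_div, mul_div_assoc]
  refine tendsto_integral_filter_of_dominated_convergence _ ?_ ?_
    (integrableOn_mul_one_add_rpow hH hHβ) ?_
  · filter_upwards [hy.eventually self_mem_nhdsWithin] with i hyi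
    exact aestronglyMeasurable_mul_div hanti (hh i) hyi
  · filter_upwards [hG.eventually_forall_norm_mul_div_le hanti hG0 hβ hβρ hy hH0 hbound]
      with i hi using (ae_restrict_mem measurableSet_Ioi).mono hi
  · filter_upwards [ae_restrict_mem measurableSet_Ioi] with u hu
    exact (hlim u hu).mul ((hG u hu).comp hy)

end RegularlyVaryingAtZero

end RegularVariation

section LayerCake

open Set

variable {Ω : Type*} [MeasurableSpace Ω] {μ : Measure Ω} {f : Ω → ℝ} {g : ℝ → ℝ}

theorem lintegral_intervalIntegral_eq_lintegral_mul_measureReal (hf0 : 0 ≤ᵐ[μ] f)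
    (hf : AEMeasurable f μ) (hg : ∀ a b, IntervalIntegrable g volume a b) (hg0 : ∀ t, 0 ≤ g t)
    (hfin : ∀ t, 0 < t → μ {ω | t ≤ f ω} ≠ ⊤) :
    ∫⁻ ω, ENNReal.ofReal (∫ t in 0..f ω, g t) ∂μ =
      ∫⁻ t in Ioi 0, ENNReal.ofReal (g t * μ.real {ω | t ≤ f ω}) := by
  rw [lintegral_comp_eq_lintegral_meas_le_mul μ hf0 hf (fun t _ => hg 0 t) (ae_of_all _ hg0)]
  refine setLIntegral_congr_fun measurableSet_Ioi fun t ht => ?_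
  rw [ENNReal.ofReal_mul (hg0 t), ofReal_measureReal (hfin t ht), mul_comm]

theorem integrable_intervalIntegral_and_integral_eq_of_nonneg (hf0 : 0 ≤ᵐ[μ] f)
    (hf : AEMeasurable f μ) (hg : ∀ a b, IntervalIntegrable g volume a b) (hg0 : ∀ t, 0 ≤ g t)
    (hfin : ∀ t, 0 < t → μ {ω | t ≤ f ω} ≠ ⊤)
    (hint : IntegrableOn (fun t => g t * μ.real {ω | t ≤ f ω}) (Ioi 0)) :
    Integrable (fun ω => ∫ t in 0..f ω, g t) μ ∧
      ∫ ω, (∫ t in 0..f ω, g t) ∂μ = ∫ t in Ioi 0, g t * μ.real {ω | t ≤ f ω} := by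
  have hcake := lintegral_intervalIntegral_eq_lintegral_mul_measureReal hf0 hf hg hg0 hfin
  have hmeas : AEStronglyMeasurable (fun ω => ∫ t in 0..f ω, g t) μ :=
    ((intervalIntegral.continuous_primitive hg 0).measurable.comp_aemeasurable
      hf).aestronglyMeasurable
  have hinner0 : 0 ≤ᵐ[μ] fun ω => ∫ t in 0..f ω, g t :=
    hf0.mono fun ω hω => intervalIntegral.integral_nonneg hω fun t _ => hg0 t
  have hprod0 : 0 ≤ᵐ[volume.restrict (Ioi 0)] fun t => g t * μ.real {ω | t ≤ f ω} :=
    ae_of_all _ fun t => mul_nonneg (hg0 t) measureReal_nonneg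
  refine ⟨⟨hmeas, ?_⟩, ?_⟩
  · rw [hasFiniteIntegral_iff_ofReal hinner0, hcake, ← hasFiniteIntegral_iff_ofReal hprod0]
    exact hint.2
  · rw [integral_eq_lintegral_of_nonneg_ae hinner0 hmeas, hcake,
      ← integral_eq_lintegral_of_nonneg_ae hprod0 hint.1]

/-- Unlike in Mathlib's layer cake formula, `g` may change sign. -/
theorem integral_intervalIntegral_eq_integral_mul_measureReal (hf0 : 0 ≤ᵐ[μ] f)
    (hf : AEMeasurable f μ) (hg : ∀ a b, IntervalIntegrable g volume a b)
    (hfin : ∀ t, 0 < t → μ {ω | t ≤ f ω} ≠ ⊤)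
    (hint : IntegrableOn (fun t => g t * μ.real {ω | t ≤ f ω}) (Ioi 0)) :
    ∫ ω, (∫ t in 0..f ω, g t) ∂μ = ∫ t in Ioi 0, g t * μ.real {ω | t ≤ f ω} := by
  have hposPart : ∀ {g : ℝ → ℝ}, (∀ a b, IntervalIntegrable g volume a b) →
      ∀ a b, IntervalIntegrable (fun t => max (g t) 0) volume a b :=
    fun hg a b => ⟨(hg a b).1.pos_part, (hg a b).2.pos_part⟩
  have hmul : ∀ g : ℝ → ℝ, ∀ t, max (g t) 0 * μ.real {ω | t ≤ f ω} =
      max (g t * μ.real {ω | t ≤ f ω}) 0 := fun g t => by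
    rw [max_mul_of_nonneg _ _ measureReal_nonneg, zero_mul]
  have hneg : ∀ a b, IntervalIntegrable (fun t => -g t) volume a b := fun a b => (hg a b).neg
  have hintPos : IntegrableOn (fun t => max (g t) 0 * μ.real {ω | t ≤ f ω}) (Ioi 0) := by
    simp only [hmul]
    exact hint.pos_part
  have hintNeg : IntegrableOn (fun t => max (-g t) 0 * μ.real {ω | t ≤ f ω}) (Ioi 0) := by
    simp only [hmul (fun t => -g t), neg_mul]
    exact hint.neg_part
  obtain ⟨hP, hPeq⟩ := integrable_intervalIntegral_and_integral_eq_of_nonneg hf0 hf (hposPart hg)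
    (fun t => le_max_right _ _) hfin hintPos
  obtain ⟨hN, hNeq⟩ := integrable_intervalIntegral_and_integral_eq_of_nonneg hf0 hf (hposPart hneg)
    (fun t => le_max_right _ _) hfin hintNeg
  calc ∫ ω, (∫ t in 0..f ω, g t) ∂μ
      = ∫ ω, ((∫ t in 0..f ω, max (g t) 0) - ∫ t in 0..f ω, max (-g t) 0) ∂μ := by
        simp only [← intervalIntegral.integral_sub (hposPart hg _ _) (hposPart hneg _ _),
          max_zero_sub_eq_self]
    _ = ∫ t in Ioi 0, (max (g t) 0 * μ.real {ω | t ≤ f ω} -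
          max (-g t) 0 * μ.real {ω | t ≤ f ω}) := by
        rw [integral_sub hP hN, hPeq, hNeq, integral_sub hintPos hintNeg]
    _ = ∫ t in Ioi 0, g t * μ.real {ω | t ≤ f ω} := by
        simp only [← sub_mul, max_zero_sub_eq_self]

end LayerCake

section ScaledBinomialKernel

open Set Topology

theorem one_sub_mul_pow_le_exp {y u : ℝ} {j : ℕ} (hu : 0 ≤ u) (hyu : y * u ≤ 1)
    (hj : 1 / 2 ≤ j * y) :
    (1 - y * u) ^ j ≤ exp (-(1 / 2) * u) :=
  calc (1 - y * u) ^ j ≤ exp (-(y * u)) ^ j :=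
        pow_le_pow_left₀ (sub_nonneg.2 hyu) (one_sub_le_exp_neg _) j
    _ = exp (-(j * y) * u) := by rw [← exp_nat_mul]; ring_nf
    _ ≤ exp (-(1 / 2) * u) := exp_le_exp.2 (by nlinarith)

theorem tendsto_one_sub_inv_mul_pow_sub (u : ℝ) (j : ℕ) :
    Tendsto (fun n : ℕ => (1 - (n : ℝ)⁻¹ * u) ^ (n - j)) atTop (𝓝 (exp (-u))) := by
  have hbase : Tendsto (fun n : ℕ => 1 - (n : ℝ)⁻¹ * u) atTop (𝓝 1) := by
    simpa using ((tendsto_inv_atTop_nhds_zero_nat (𝕜 := ℝ)).mul_const u).const_sub 1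
  have hquot := (tendsto_one_add_div_pow_exp (-u)).mul ((hbase.pow j).inv₀ (by simp))
  simp only [one_pow, inv_one, mul_one] at hquot
  refine hquot.congr' ?_
  filter_upwards [hbase.eventually_ne one_ne_zero, eventually_ge_atTop j] with n hn hj
  rw [pow_sub₀ _ hn hj, show 1 + -u / (n : ℝ) = 1 - (n : ℝ)⁻¹ * u by ring]

theorem tendsto_sub_mul_inv (r : ℕ) :
    Tendsto (fun n : ℕ => ((n - r : ℕ) : ℝ) * (n : ℝ)⁻¹) atTop (𝓝 1) := by
  have hone := ((tendsto_inv_atTop_nhds_zero_nat (𝕜 := ℝ)).const_mul (r : ℝ)).const_sub 1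
  rw [mul_zero, sub_zero] at hone
  refine hone.congr' ?_
  filter_upwards [eventually_ge_atTop r, eventually_ne_atTop 0] with n hrn hn
  rw [Nat.cast_sub hrn, sub_mul, mul_inv_cancel₀ (Nat.cast_ne_zero.2 hn)]

/-- The derivative in `u` of the rescaled binomial weight `u ^ r * (1 - y * u) ^ m`; with
`y = 1 / n` and `m = n - r` it is the kernel against which the tail is integrated. -/
noncomputable def scaledBinomialKernel (r m : ℕ) (y u : ℝ) : ℝ :=
  r * u ^ (r - 1) * (1 - y * u) ^ m - m * y * (u ^ r * (1 - y * u) ^ (m - 1))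

namespace scaledBinomialKernel

variable {r m : ℕ} {y u : ℝ}

theorem hasDerivAt (r m : ℕ) (y u : ℝ) :
    HasDerivAt (fun u : ℝ => u ^ r * (1 - y * u) ^ m) (scaledBinomialKernel r m y u) u := by
  have hlin : HasDerivAt (fun u : ℝ => 1 - y * u) (-y) u := by
    simpa using ((hasDerivAt_id u).const_mul y).const_sub 1
  refine ((hasDerivAt_pow r u).mul (hlin.pow m)).congr_deriv ?_
  simp only [scaledBinomialKernel, Pi.pow_apply]
  ring

theorem continuous (r m : ℕ) (y : ℝ) : Continuous (scaledBinomialKernel r m y) := by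
  unfold scaledBinomialKernel
  fun_prop

theorem integral_eq (hr : r ≠ 0) (m : ℕ) (y x : ℝ) :
    ∫ u in 0..x, scaledBinomialKernel r m y u = x ^ r * (1 - y * x) ^ m := by
  rw [intervalIntegral.integral_eq_sub_of_hasDerivAt (fun u _ => hasDerivAt r m y u)
    ((continuous r m y).intervalIntegrable 0 x), zero_pow hr, zero_mul, sub_zero]

/-- The dominating function for the kernels `scaledBinomialKernel r (n - r) (1 / n)` on
`0 ≤ u ≤ n`, uniform in large `n`. The rate `1 / 2` leaves room for the exponent `n - r - 1` in
place of `n`. -/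
noncomputable def majorant (r : ℕ) (u : ℝ) : ℝ :=
  (r * u ^ (r - 1) + u ^ r) * exp (-(1 / 2) * u)

theorem norm_le_majorant (hy : 0 ≤ y) (hu : 0 ≤ u) (hyu : y * u ≤ 1) (hmy : m * y ≤ 1)
    (hm : 1 / 2 ≤ ((m - 1 : ℕ) : ℝ) * y) : ‖scaledBinomialKernel r m y u‖ ≤ majorant r u := by
  have : 0 ≤ 1 - y * u := sub_nonneg.2 hyu
  have hpred : ((m - 1 : ℕ) : ℝ) ≤ m := by exact_mod_cast Nat.sub_le m 1
  have hpow := one_sub_mul_pow_le_exp hu hyu (hm.trans (mul_le_mul_of_nonneg_right hpred hy))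
  have hpow' := one_sub_mul_pow_le_exp hu hyu hm
  calc ‖scaledBinomialKernel r m y u‖
      ≤ r * u ^ (r - 1) * (1 - y * u) ^ m + m * y * (u ^ r * (1 - y * u) ^ (m - 1)) := by
        refine (norm_sub_le _ _).trans_eq ?_
        rw [norm_of_nonneg (by positivity), norm_of_nonneg (by positivity)]
    _ ≤ r * u ^ (r - 1) * exp (-(1 / 2) * u) + 1 * (u ^ r * exp (-(1 / 2) * u)) := by
        gcongr
    _ = majorant r u := by rw [majorant]; ring

theorem majorant_nonneg (r : ℕ) (hu : 0 ≤ u) : 0 ≤ majorant r u := by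
  unfold majorant
  positivity

theorem integrableOn_majorant_mul_rpow (hr : r ≠ 0) {β : ℝ} (hβ : β < r) :
    IntegrableOn (fun u => majorant r u * u ^ (-β)) (Ioi 0) := by
  have hterm : ∀ s : ℝ, -1 < s →
      IntegrableOn (fun u : ℝ => u ^ s * exp (-(1 / 2) * u ^ (1 : ℝ))) (Ioi 0) :=
    fun s hs => integrableOn_rpow_mul_exp_neg_mul_rpow hs one_pos (by norm_num)
  refine (((hterm (r - 1 - β) (by linarith)).const_mul (r : ℝ)).add
    (hterm (r - β) (by linarith))).congr ?_
  filter_upwards [ae_restrict_mem measurableSet_Ioi] with u (hu : 0 < u)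
  have hpred : u ^ ((r : ℝ) - 1) = u ^ (r - 1) := by
    rw [← Nat.cast_pred (Nat.pos_of_ne_zero hr), rpow_natCast]
  simp only [Pi.add_apply, majorant]
  rw [sub_eq_add_neg _ β, sub_eq_add_neg _ β, rpow_add hu, rpow_add hu, hpred, rpow_natCast,
    rpow_one]
  ring

theorem integrableOn_majorant (hr : r ≠ 0) : IntegrableOn (majorant r) (Ioi 0) := by
  simpa using integrableOn_majorant_mul_rpow hr (β := 0) (by positivity)

theorem tendsto_inv_nat (r : ℕ) (u : ℝ) :
    Tendsto (fun n : ℕ => scaledBinomialKernel r (n - r) (n : ℝ)⁻¹ u) atTop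
      (𝓝 (r * u ^ (r - 1) * exp (-u) - u ^ r * exp (-u))) := by
  have hfirst := (tendsto_one_sub_inv_mul_pow_sub u r).const_mul (r * u ^ (r - 1))
  have hsecond := (tendsto_sub_mul_inv r).mul
    ((tendsto_one_sub_inv_mul_pow_sub u (r + 1)).const_mul (u ^ r))
  simpa only [scaledBinomialKernel, Nat.sub_sub, one_mul] using hfirst.sub hsecond

theorem eventually_norm_inv_nat_le_majorant (r : ℕ) :
    ∀ᶠ n : ℕ in atTop, ∀ u, 0 ≤ u → u * (n : ℝ)⁻¹ ≤ 1 →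
      ‖scaledBinomialKernel r (n - r) (n : ℝ)⁻¹ u‖ ≤ majorant r u := by
  filter_upwards [(tendsto_sub_mul_inv (r + 1)).eventually_const_le (by norm_num : (1 / 2 : ℝ) < 1)]
    with n hn u hu hun
  refine norm_le_majorant (by positivity) hu (mul_comm u _ ▸ hun) ?_ (by rwa [Nat.sub_sub])
  rw [← div_eq_mul_inv]
  exact div_le_one_of_le₀ (by exact_mod_cast Nat.sub_le n r) n.cast_nonneg

theorem integral_limit_mul_rpow (hr : r ≠ 0) {α : ℝ} (hα : α < r) :
    ∫ u in Ioi (0 : ℝ), (r * u ^ (r - 1) * exp (-u) - u ^ r * exp (-u)) * u ^ (-α) =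
      α * Gamma (r - α) := by
  have hpos : 0 < r - α := sub_pos.2 hα
  have hpow : ∀ u ∈ Ioi (0 : ℝ),
      (r * u ^ (r - 1) * exp (-u) - u ^ r * exp (-u)) * u ^ (-α) =
        r * (exp (-u) * u ^ (r - α - 1)) - exp (-u) * u ^ (r - α + 1 - 1) := by
    intro u (hu : 0 < u)
    have hpred : u ^ (r - 1) = u ^ (r : ℝ) / u := by
      rw [rpow_natCast, pow_sub₀ u hu.ne' (Nat.one_le_iff_ne_zero.2 hr), pow_one, div_eq_mul_inv]
    rw [hpred, ← rpow_natCast, add_sub_cancel_right, rpow_sub hu, rpow_sub hu, rpow_neg hu.le,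
      rpow_one]
    field_simp
  rw [setIntegral_congr_fun measurableSet_Ioi hpow,
    integral_sub ((GammaIntegral_convergent hpos).const_mul _)
      (GammaIntegral_convergent (by positivity)),
    integral_const_mul, ← Gamma_eq_integral hpos, ← Gamma_eq_integral (by positivity),
    Gamma_add_one hpos.ne']
  ring

end scaledBinomialKernel

end ScaledBinomialKernel

section UnitTail

open Set Topology

/-- The tail `γ̄(x) = γ([x, 1])`; it takes the junk value `0` where `γ([x, 1]) = ∞`. -/
noncomputable def unitTail (γ : Measure ℝ) (x : ℝ) : ℝ :=
  γ.real (Icc x 1)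

namespace unitTail

variable {γ : Measure ℝ} {ρ : ℝ}

theorem nonneg (γ : Measure ℝ) (x : ℝ) : 0 ≤ unitTail γ x := measureReal_nonneg

theorem eq_zero_of_one_lt (γ : Measure ℝ) {x : ℝ} (hx : 1 < x) : unitTail γ x = 0 := by
  rw [unitTail, Icc_eq_empty_of_lt hx, measureReal_empty]

theorem measure_Icc_ne_top (hγ : RegularlyVaryingAtZero (unitTail γ) ρ) {x : ℝ} (hx : 0 < x) :
    γ (Icc x 1) ≠ ⊤ := by
  obtain ⟨s, hs, -, hsx⟩ := (hγ.eventually_ne_zero.and (Ioo_mem_nhdsGT hx)).exists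
  have hs_top : γ (Icc s 1) ≠ ⊤ := fun h => hs (by rw [unitTail, measureReal_def, h]; rfl)
  exact measure_ne_top_of_subset (Icc_subset_Icc_left hsx.le) hs_top

theorem antitoneOn (hγ : RegularlyVaryingAtZero (unitTail γ) ρ) :
    AntitoneOn (unitTail γ) (Ioi 0) := fun _ hs _ _ hst =>
  measureReal_mono (Icc_subset_Icc_left hst) (measure_Icc_ne_top hγ hs)

theorem integral_pow_mul_one_sub_pow_eq (hγ : ∀ x, 0 < x → γ (Icc x 1) ≠ ⊤) {r m : ℕ}
    (hr : r ≠ 0) {y : ℝ} (hy : 0 < y)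
    (hint : IntegrableOn (fun u => scaledBinomialKernel r m y u * unitTail γ (u * y)) (Ioi 0)) :
    ∫ x in Ioc (0 : ℝ) 1, x ^ r * (1 - x) ^ m ∂γ =
      y ^ r * ∫ u in Ioi 0, scaledBinomialKernel r m y u * unitTail γ (u * y) := by
  have hlevel : ∀ u, 0 < u →
      γ.restrict (Ioc 0 1) {x | u ≤ x / y} = γ (Icc (u * y) 1) := by
    intro u hu
    rw [Measure.restrict_apply (measurableSet_le measurable_const (by fun_prop))]
    congr 1
    ext x
    simp only [mem_inter_iff, mem_ofPred_eq, mem_Ioc, mem_Icc, le_div_iff₀ hy]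
    exact ⟨fun h => ⟨h.1, h.2.2⟩, fun h => ⟨h.1, (mul_pos hu hy).trans_le h.1, h.2⟩⟩
  have htail : EqOn (fun u => scaledBinomialKernel r m y u * unitTail γ (u * y))
      (fun u => scaledBinomialKernel r m y u *
        (γ.restrict (Ioc 0 1)).real {x | u ≤ x / y}) (Ioi 0) := fun u hu => by
    simp only [unitTail, measureReal_def, hlevel u hu]
  have hcake := integral_intervalIntegral_eq_integral_mul_measureReal
    (μ := γ.restrict (Ioc 0 1)) (f := fun x => x / y)
    ((ae_restrict_mem measurableSet_Ioc).mono fun x hx => div_nonneg hx.1.le hy.le) (by fun_prop)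
    ((scaledBinomialKernel.continuous r m y).intervalIntegrable)
    (fun u hu => hlevel u hu ▸ hγ _ (mul_pos hu hy))
    (hint.congr_fun htail measurableSet_Ioi)
  rw [setIntegral_congr_fun measurableSet_Ioi htail, ← hcake, ← integral_const_mul]
  refine integral_congr_ae (ae_of_all _ fun x => ?_)
  simp only [scaledBinomialKernel.integral_eq hr, mul_div_cancel₀ x hy.ne', div_pow]
  field_simp

theorem tendsto_pow_mul_integral_div {α : ℝ} {r : ℕ}
    (hγ : RegularlyVaryingAtZero (unitTail γ) (-α)) (hα : 0 ≤ α) (hαr : α < r) :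
    Tendsto (fun n : ℕ => n ^ r * (∫ x in Ioc (0 : ℝ) 1, x ^ r * (1 - x) ^ (n - r) ∂γ) /
      unitTail γ (n : ℝ)⁻¹) atTop (𝓝 (α * Gamma (r - α))) := by
  have hr : r ≠ 0 := Nat.cast_ne_zero.1 (hα.trans_lt hαr).ne'
  obtain ⟨β, hαβ, hβr⟩ := exists_between hαr
  have hβ : 0 ≤ β := hα.trans hαβ.le
  have hinv : Tendsto (fun n : ℕ => (n : ℝ)⁻¹) atTop (𝓝[>] 0) :=
    tendsto_inv_atTop_nhdsGT_zero.comp tendsto_natCast_atTop_atTop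
  have hmeas : ∀ n : ℕ, Measurable (scaledBinomialKernel r (n - r) (n : ℝ)⁻¹) :=
    fun n => (scaledBinomialKernel.continuous _ _ _).measurable
  have hbound : ∀ᶠ n : ℕ in atTop, ∀ u, 0 < u → unitTail γ (u * (n : ℝ)⁻¹) ≠ 0 →
      ‖scaledBinomialKernel r (n - r) (n : ℝ)⁻¹ u‖ ≤ scaledBinomialKernel.majorant r u := by
    filter_upwards [scaledBinomialKernel.eventually_norm_inv_nat_le_majorant r] with n hn u hu htail
    exact hn u hu.le (not_lt.1 fun h => htail (eq_zero_of_one_lt γ h))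
  have hmajorant0 : ∀ u, 0 < u → 0 ≤ scaledBinomialKernel.majorant r u :=
    fun u hu => scaledBinomialKernel.majorant_nonneg r hu.le
  have hmajorant := scaledBinomialKernel.integrableOn_majorant hr
  have hmajorantβ := scaledBinomialKernel.integrableOn_majorant_mul_rpow hr hβr
  have hlim := hγ.tendsto_integral_mul_comp_mul_div (antitoneOn hγ) (nonneg γ) hβ
    (neg_lt_neg hαβ) hinv hmeas hmajorant0 hbound hmajorant hmajorantβ
    (fun u _ => scaledBinomialKernel.tendsto_inv_nat r u)
  rw [scaledBinomialKernel.integral_limit_mul_rpow hr hαr] at hlim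
  refine hlim.congr' ?_
  filter_upwards [eventually_gt_atTop 0, hγ.eventually_integrableOn_mul_comp_mul (antitoneOn hγ)
    (nonneg γ) hβ (neg_lt_neg hαβ) hinv hmeas hmajorant0 hbound hmajorant hmajorantβ] with n hn hint
  have hn0 : (0 : ℝ) < n := Nat.cast_pos.2 hn
  rw [integral_pow_mul_one_sub_pow_eq (fun x hx => measure_Icc_ne_top hγ hx) hr (inv_pos.2 hn0)
    hint, ← mul_assoc, ← mul_pow, mul_inv_cancel₀ hn0.ne', one_pow, one_mul]

end unitTail

end UnitTail

theorem tendsto_choose_mul_inv_pow (r : ℕ) :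
    Tendsto (fun n : ℕ => (n.choose r : ℝ) * (n : ℝ)⁻¹ ^ r) atTop (nhds (1 / r.factorial)) := by
  have hone : Tendsto (fun n : ℕ => (n : ℝ) * (n : ℝ)⁻¹) atTop (nhds 1) :=
    tendsto_const_nhds.congr' <| (eventually_ne_atTop 0).mono fun n hn =>
      (mul_inv_cancel₀ (Nat.cast_ne_zero.2 hn)).symm
  simpa using ProbabilityTheory.tendsto_choose_mul_pow_atTop r hone

theorem Gamma_sub_one_div_factorial {r : ℕ} (hr : 2 ≤ r) :
    Gamma (r - 1) / r.factorial = 1 / ((r : ℝ) * (r - 1)) := by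
  obtain ⟨k, rfl⟩ := Nat.exists_eq_add_of_le' hr
  have hcast : ((k + 2 : ℕ) : ℝ) - 1 = k + 1 := by push_cast; ring
  rw [hcast, Gamma_nat_eq_factorial, Nat.factorial_succ, Nat.factorial_succ]
  push_cast
  rw [show (k : ℝ) + 1 + 1 = k + 2 by ring]
  field_simp

theorem tauberian_multiplicity_alpha_one_general {ℓ : ℝ → ℝ} {α L : ℝ} {γ : Measure ℝ} {r : ℕ}
    (hℓ : ∀ c : ℝ, 0 < c → Tendsto (fun t => ℓ (c * t) / ℓ t) atTop (nhds 1)) (hL : L ≠ 0)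
    (hα : 0 ≤ α) (hαr : α < r)
    (hlim : Tendsto (fun x => unitTail γ x * x ^ α / ℓ (1 / x)) (nhdsWithin 0 (Set.Ioi 0))
      (nhds L)) :
    Tendsto (fun n : ℕ =>
        ((n.choose r : ℝ) * ∫ x in Set.Ioc (0 : ℝ) 1, x ^ r * (1 - x) ^ (n - r) ∂γ) /
          ((n : ℝ) ^ α * ℓ n))
      atTop (nhds (L * (α * Gamma (r - α)) / r.factorial)) := by
  have hγ := RegularlyVaryingAtZero.of_tendsto_mul_rpow_div hℓ hL hlim
  have hinv : Tendsto (fun n : ℕ => (n : ℝ)⁻¹) atTop (nhdsWithin 0 (Set.Ioi 0)) :=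
    tendsto_inv_atTop_nhdsGT_zero.comp tendsto_natCast_atTop_atTop
  have hprod := ((tendsto_choose_mul_inv_pow r).mul
    (unitTail.tendsto_pow_mul_integral_div hγ hα hαr)).mul (hlim.comp hinv)
  rw [show 1 / (r.factorial : ℝ) * (α * Gamma (r - α)) * L =
    L * (α * Gamma (r - α)) / r.factorial by ring] at hprod
  refine hprod.congr' ?_
  filter_upwards [eventually_gt_atTop 0, hinv.eventually hγ.eventually_ne_zero] with n hn htail
  have hn0 : (0 : ℝ) < n := Nat.cast_pos.2 hn
  have hnα : (n : ℝ) ^ α ≠ 0 := (rpow_pos_of_pos hn0 α).ne'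
  simp only [Function.comp_apply, one_div, inv_inv, inv_rpow hn0.le, inv_pow]
  generalize unitTail γ (n : ℝ)⁻¹ = T at htail ⊢
  field_simp

/-- If `ℓ` is slowly varying at `∞`, `L > 0`, and `γ` is a Borel measure on `(0,1]`
with `∫ x γ(dx) < ∞` and tail `γ̄(x) = γ([x,1])` satisfying `γ̄(x) x / ℓ(1/x) → L`
as `x ↓ 0`, then for every `r ≥ 2`,
`binom(n,r) ∫₀¹ x^r (1-x)^{n-r} γ(dx) / (n ℓ(n)) → L / (r(r-1))`. -/
theorem tauberian_multiplicity_alpha_one (ℓ : ℝ → ℝ)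
    (hℓpos : ∀ t : ℝ, 0 < t → 0 < ℓ t)
    (hℓsv : ∀ c : ℝ, 0 < c → Tendsto (fun t : ℝ => ℓ (c * t) / ℓ t) atTop (nhds 1))
    (L : ℝ) (hL : 0 < L)
    (γ : Measure ℝ) (hsupp : γ (Set.Ioc (0 : ℝ) 1)ᶜ = 0)
    (hint : ∫⁻ x in Set.Ioc (0 : ℝ) 1, ENNReal.ofReal x ∂γ < ⊤)
    (hlim : Tendsto (fun x : ℝ => (γ (Set.Icc x 1)).toReal * x / ℓ (1 / x))
      (nhdsWithin 0 (Set.Ioi 0)) (nhds L)) :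
    ∀ r : ℕ, 2 ≤ r →
      Tendsto (fun n : ℕ =>
          ((n.choose r : ℝ) * ∫ x in Set.Ioc (0 : ℝ) 1, x ^ r * (1 - x) ^ (n - r) ∂γ) /
            ((n : ℝ) * ℓ n))
        atTop (nhds (L / ((r : ℝ) * ((r : ℝ) - 1)))) := by
  intro r hr
  have h := tauberian_multiplicity_alpha_one_general (α := 1) hℓsv hL.ne' zero_le_one
    (by exact_mod_cast hr) (by simpa only [rpow_one, unitTail, measureReal_def] using hlim)
  simpa only [rpow_one, one_mul, mul_div_assoc L, Gamma_sub_one_div_factorial hr,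
    mul_one_div] using h
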